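/- Let M be a locally principally quasi-retractable right R-module. If S = End_R(M) is a left centrally AIP ring, then M is a centrally endo-AIP module. -/

import Mathlib

/-- A submodule `N` of `M` is *fully invariant* if it is stable under every
endomorphism of `M`. -/
def IsFullyInvariant {R M : Type*} [Ring R] [AddCommGroup M] [Module R M]
    (N : Submodule R M) : Prop :=
  ∀ φ : Module.End R M, ∀ n ∈ N, φ n ∈ N

/-- `M` is a *centrally endo-AIP* module: for every fully invariant submodule `N`
of `M`, the left annihilator of `N` in `S = End_R(M)` is a centrally s-unital
ideal of `S`, i.e. every `φ` annihilating `N` satisfies `φ * ψ = φ` for some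
central element `ψ` of `S` annihilating `N`. -/
def IsCentrallyEndoAIP (R M : Type*) [Ring R] [AddCommGroup M] [Module R M] : Prop :=
  ∀ N : Submodule R M, IsFullyInvariant N →
    ∀ φ : Module.End R M, (∀ n ∈ N, φ n = 0) →
      ∃ ψ : Module.End R M, (∀ n ∈ N, ψ n = 0) ∧
        (∀ g : Module.End R M, ψ * g = g * ψ) ∧ φ * ψ = φ

/-- `M` is an *endo-AIP* module: for every fully invariant submodule `N` of `M`,
the left annihilator of `N` in `S = End_R(M)` is a right s-unital ideal of `S`. -/
def IsEndoAIP (R M : Type*) [Ring R] [AddCommGroup M] [Module R M] : Prop :=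
  ∀ N : Submodule R M, IsFullyInvariant N →
    ∀ φ : Module.End R M, (∀ n ∈ N, φ n = 0) →
      ∃ ψ : Module.End R M, (∀ n ∈ N, ψ n = 0) ∧ φ * ψ = φ

/-- A ring `S` is a *(left) centrally AIP* ring: the left annihilator of every
two-sided ideal of `S` is a centrally s-unital ideal of `S`. -/
def IsCentrallyAIPRing (S : Type*) [Ring S] : Prop :=
  ∀ I : TwoSidedIdeal S, ∀ a : S, (∀ x ∈ I, a * x = 0) →
    ∃ z : S, (∀ x ∈ I, z * x = 0) ∧ (∀ s : S, z * s = s * z) ∧ a * z = a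

/-!
For a fully invariant submodule `N`, the endomorphisms of `M` with range in `N` form a two-sided
ideal `I` of `S = End_R(M)`. If `N` is a sum of ranges of endomorphisms, then `l_S(N) = l_S(I)`, so
the condition on `S` makes `l_S(N)` centrally s-unital. For an arbitrary fully invariant `N` and
`φ ∈ l_S(N)`, enlarge `N` to `r_M(SφS)`, the largest fully invariant submodule on which `φ`
vanishes: a central `ψ` vanishing there with `φψ = φ` also vanishes on `N`.
-/

section

variable {R M : Type*} [Ring R] [AddCommGroup M] [Module R M] {N K : Submodule R M}

/-- `N` is `M`-*generated*: it is a sum of images of endomorphisms of `M`. The empty sum is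
allowed, so `⊥` is `M`-generated. -/
def IsEndGenerated (N : Submodule R M) : Prop :=
  ∃ T : Set (Module.End R M), N = ⨆ ψ ∈ T, LinearMap.range ψ

theorem IsEndGenerated.of_ne_bot (h : N ≠ ⊥ → ∃ ψ : Module.End R M, N = LinearMap.range ψ) :
    IsEndGenerated N := by
  rcases eq_or_ne N ⊥ with hN | hN
  · exact ⟨∅, by rw [hN, iSup_emptyset]⟩
  · obtain ⟨ψ, hψ⟩ := h hN
    exact ⟨{ψ}, by rw [hψ, iSup_singleton]⟩

namespace IsFullyInvariant

/-- The ideal `Hom_R(M, N)` of `End_R(M)`, consisting of the endomorphisms with range in the fully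
invariant submodule `N`. It transfers annihilators of `N` to annihilators of a two-sided ideal. -/
def homIdeal (hN : IsFullyInvariant N) : TwoSidedIdeal (Module.End R M) :=
  .mk' {x | ∀ m, x m ∈ N} (fun _ => N.zero_mem) (fun hx hy m => N.add_mem (hx m) (hy m))
    (fun hx m => N.neg_mem (hx m)) (fun {x _} hy m => hN x _ (hy m)) (fun {_ y} hx m => hx (y m))

theorem mem_homIdeal (hN : IsFullyInvariant N) {x : Module.End R M} :
    x ∈ hN.homIdeal ↔ ∀ m, x m ∈ N :=
  TwoSidedIdeal.mem_mk' ..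

theorem le_ker_iff_forall_mem_homIdeal (hN : IsFullyInvariant N) (hgen : IsEndGenerated N)
    {φ : Module.End R M} :
    N ≤ LinearMap.ker φ ↔ ∀ x ∈ hN.homIdeal, φ * x = 0 := by
  constructor
  · exact fun hφ x hx => LinearMap.ext fun m => hφ (hN.mem_homIdeal.1 hx m)
  · intro hφ
    obtain ⟨T, hT⟩ := hgen
    have range_le : ∀ ψ ∈ T, LinearMap.range ψ ≤ N := fun ψ hψ =>
      hT ▸ le_iSup₂_of_le ψ hψ le_rfl
    have mem_ideal : ∀ ψ ∈ T, ψ ∈ hN.homIdeal := fun ψ hψ =>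
      hN.mem_homIdeal.2 fun m => range_le ψ hψ (LinearMap.mem_range_self ψ m)
    rw [hT]
    exact iSup₂_le fun ψ hψ => LinearMap.range_le_ker_iff.2 (hφ ψ (mem_ideal ψ hψ))

theorem exists_central_mul_eq_self (hN : IsFullyInvariant N) (hgen : IsEndGenerated N)
    (hS : IsCentrallyAIPRing (Module.End R M)) {φ : Module.End R M} (hφ : N ≤ LinearMap.ker φ) :
    ∃ ψ : Module.End R M, N ≤ LinearMap.ker ψ ∧ (∀ g, ψ * g = g * ψ) ∧ φ * ψ = φ := by
  simpa only [hN.le_ker_iff_forall_mem_homIdeal hgen] using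
    hS hN.homIdeal φ ((hN.le_ker_iff_forall_mem_homIdeal hgen).1 hφ)

end IsFullyInvariant

/-- The largest fully invariant submodule contained in `K`. For `K = ker φ` it is the right
annihilator `r_M(SφS)` of the ideal generated by `φ` in `S = End_R(M)`. -/
def fullyInvariantCore (K : Submodule R M) : Submodule R M :=
  ⨅ b : Module.End R M, K.comap b

theorem mem_fullyInvariantCore {m : M} :
    m ∈ fullyInvariantCore K ↔ ∀ b : Module.End R M, b m ∈ K := by
  simp only [fullyInvariantCore, Submodule.mem_iInf, Submodule.mem_comap]

theorem isFullyInvariant_fullyInvariantCore (K : Submodule R M) :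
    IsFullyInvariant (fullyInvariantCore K) := fun g _ hm =>
  mem_fullyInvariantCore.2 fun b => mem_fullyInvariantCore.1 hm (b * g)

theorem fullyInvariantCore_le (K : Submodule R M) : fullyInvariantCore K ≤ K :=
  fun _ hm => mem_fullyInvariantCore.1 hm 1

theorem IsFullyInvariant.le_fullyInvariantCore (hN : IsFullyInvariant N) (hNK : N ≤ K) :
    N ≤ fullyInvariantCore K :=
  fun n hn => mem_fullyInvariantCore.2 fun b => hNK (hN b n hn)

theorem coe_fullyInvariantCore_ker (φ : Module.End R M) :
    (fullyInvariantCore (LinearMap.ker φ) : Set M) =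
      {m : M | ∀ a b : Module.End R M, (a * φ * b) m = 0} := by
  ext m
  simp only [SetLike.mem_coe, mem_fullyInvariantCore, LinearMap.mem_ker, Set.mem_ofPred_eq,
    Module.End.mul_apply]
  exact ⟨fun h a b => by rw [h b, map_zero], fun h b => h 1 b⟩

end

theorem stmt_16_general (R M : Type*) [Ring R] [AddCommGroup M] [Module R M]
    (hgen : ∀ φ : Module.End R M, IsEndGenerated (fullyInvariantCore (LinearMap.ker φ)))
    (hS : IsCentrallyAIPRing (Module.End R M)) :
    IsCentrallyEndoAIP R M := by
  intro N hN φ hφ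
  have hN_le : N ≤ fullyInvariantCore (LinearMap.ker φ) := hN.le_fullyInvariantCore hφ
  obtain ⟨ψ, hψ, hcentral, hφψ⟩ :=
    (isFullyInvariant_fullyInvariantCore (LinearMap.ker φ)).exists_central_mul_eq_self (hgen φ) hS
      (fullyInvariantCore_le _)
  exact ⟨ψ, hN_le.trans hψ, hcentral, hφψ⟩

/-- A locally principally quasi-retractable module whose endomorphism ring
is a left centrally AIP ring is a centrally endo-AIP module. -/
theorem stmt_16 (R M : Type*) [Ring R] [AddCommGroup M] [Module R M]
    (hret : ∀ φ : Module.End R M,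
      {m : M | ∀ a b : Module.End R M, (a * φ * b) m = 0} ≠ {0} →
      ∃ ψ : Module.End R M, ψ ≠ 0 ∧
        {m : M | ∀ a b : Module.End R M, (a * φ * b) m = 0} = Set.range ψ)
    (hS : IsCentrallyAIPRing (Module.End R M)) :
    IsCentrallyEndoAIP R M := by
  simp only [← coe_fullyInvariantCore_ker, ← LinearMap.coe_range, ← Submodule.bot_coe (R := R),
    SetLike.coe_set_eq, ne_eq] at hret
  exact stmt_16_general R M (fun φ => .of_ne_bot fun h => (hret φ h).imp fun _ => And.right) hS
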